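/- arXiv:2502.12394 — 3 statements merged into one kernel-verified Lean document; each statement's English description precedes it below -/
import Mathlib

section
/- Let d be a positive integer and let 0 < a_1 < b_1 ≤ d and 0 < a_2 < b_2 ≤ d be integers with a_1 ≤ a_2 and b_1 ≤ b_2, where these two inequalities are not both equalities. Then ℓ_d^{(a_1,b_1)}(n) ≥ ℓ_d^{(a_2,b_2)}(n) for all integers n ≥ 1. -/
open Multiset Finset Filter

/-- A partition is encoded as a nonempty multiset of positive integers (its parts). -/
def IsPartition (M : Multiset ℕ) : Prop := M ≠ 0 ∧ ∀ x ∈ M, 0 < x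

/-- The perimeter of a partition: (largest part) + (number of parts) - 1. -/
def perim (M : Multiset ℕ) : ℕ := M.sup + Multiset.card M - 1

/-- `rP n P` counts the partitions (of any sum) with perimeter `n` satisfying `P`. -/
noncomputable def rP (n : ℕ) (P : Multiset ℕ → Prop) : ℕ :=
  Set.ncard {M : Multiset ℕ | IsPartition M ∧ perim M = n ∧ P M}

/-- `ellP d a b n`: partitions of perimeter n with every part ≡ a or ≡ b (mod d). -/
noncomputable def ellP (d a b n : ℕ) : ℕ :=
  rP n (fun M => ∀ x ∈ M, x % d = a % d ∨ x % d = b % d)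

theorem aux_form {d c x : ℕ} (hc : 0 < c) (hcd : c ≤ d) (hx : 0 < x) (h : x % d = c % d) :
    ∃ i, x = c + d * i := by
  have hle : c ≤ x := by
    by_contra hlt
    push Not at hlt
    rw [Nat.mod_eq_of_lt (by omega : x < d)] at h
    rcases Nat.lt_or_ge c d with h1 | h1
    · rw [Nat.mod_eq_of_lt h1] at h; omega
    · have : c = d := by omega
      subst this
      simp at h; omega
  obtain ⟨i, hi⟩ := (Nat.modEq_iff_dvd' hle).1 (show c ≡ x [MOD d] from h.symm)
  exact ⟨i, by omega⟩

theorem aux_sup_mem (M : Multiset ℕ) (h : M ≠ 0) : M.sup ∈ M := by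
  induction M using Multiset.induction with
  | empty => exact absurd rfl h
  | cons a s ih =>
    rw [Multiset.sup_cons]
    by_cases hs : s = 0
    · subst hs; simp
    · rcases le_total a s.sup with h1 | h1
      · rw [sup_eq_right.2 h1]; exact Multiset.mem_cons_of_mem (ih hs)
      · rw [sup_eq_left.2 h1]; exact Multiset.mem_cons_self _ _

theorem aux_fin (n : ℕ) (P : Multiset ℕ → Prop) :
    {M : Multiset ℕ | IsPartition M ∧ perim M = n ∧ P M}.Finite := by
  apply (Set.finite_Iic (n • Multiset.range (n+1))).subset
  rintro M ⟨⟨h0, hpos⟩, hp, -⟩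
  have hs := aux_sup_mem M h0
  have h1 := hpos _ hs
  have h2 : 0 < Multiset.card M := Multiset.card_pos.2 h0
  unfold perim at hp
  rw [Set.mem_Iic, Multiset.le_iff_count]
  intro x
  by_cases hx : x ∈ M
  · have h3 := Multiset.le_sup hx
    have h4 : Multiset.count x (Multiset.range (n+1)) = 1 :=
      Multiset.count_eq_one_of_mem (Multiset.nodup_range _) (Multiset.mem_range.2 (by omega))
    rw [Multiset.count_nsmul, h4]
    have := Multiset.count_le_card x M
    omega
  · rw [Multiset.count_eq_zero_of_notMem hx]; omega

theorem aux_ne {d a b : ℕ} (ha : 0 < a) (hab : a < b) (hb : b ≤ d) : b % d ≠ a % d := by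
  rw [Nat.mod_eq_of_lt (by omega : a < d)]
  rcases Nat.lt_or_ge b d with h1 | h1
  · rw [Nat.mod_eq_of_lt h1]; omega
  · have : b = d := by omega
    subst this
    simp; omega

theorem stmt_5 (d a₁ b₁ a₂ b₂ : ℕ) (hd : 1 ≤ d)
    (ha₁ : 0 < a₁) (hab₁ : a₁ < b₁) (hb₁ : b₁ ≤ d)
    (ha₂ : 0 < a₂) (hab₂ : a₂ < b₂) (hb₂ : b₂ ≤ d)
    (haa : a₁ ≤ a₂) (hbb : b₁ ≤ b₂) (hne : ¬(a₁ = a₂ ∧ b₁ = b₂))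
    (n : ℕ) (hn : 1 ≤ n) :
    ellP d a₂ b₂ n ≤ ellP d a₁ b₁ n := by
  obtain ⟨f, hf⟩ : ∃ f : ℕ → ℕ, f = fun x => if x % d = a₂ % d then x - (a₂ - a₁) else x - (b₂ - b₁) :=
    ⟨_, rfl⟩
  obtain ⟨g, hg⟩ : ∃ g : ℕ → ℕ, g = fun x => if x % d = a₁ % d then x + (a₂ - a₁) else x + (b₂ - b₁) :=
    ⟨_, rfl⟩
  have fa : ∀ i, f (a₂ + d * i) = a₁ + d * i := by
    intro i; simp only [hf, Nat.add_mul_mod_self_left, if_true]; omega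
  have fb : ∀ i, f (b₂ + d * i) = b₁ + d * i := by
    intro i
    simp only [hf, Nat.add_mul_mod_self_left, if_neg (aux_ne ha₂ hab₂ hb₂)]; omega
  have ga : ∀ i, g (a₁ + d * i) = a₂ + d * i := by
    intro i; simp only [hg, Nat.add_mul_mod_self_left, if_true]; omega
  have gb : ∀ i, g (b₁ + d * i) = b₂ + d * i := by
    intro i
    simp only [hg, Nat.add_mul_mod_self_left, if_neg (aux_ne ha₁ hab₁ hb₁)]; omega
  have form : ∀ x, 0 < x → (x % d = a₂ % d ∨ x % d = b₂ % d) →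
      (∃ i, x = a₂ + d * i) ∨ ∃ i, x = b₂ + d * i := by
    rintro x hx (h | h)
    · exact Or.inl (aux_form ha₂ (by omega) hx h)
    · exact Or.inr (aux_form (by omega) hb₂ hx h)
  have mulstep : ∀ i j : ℕ, i < j → d * i + d ≤ d * j := by
    intro i j h
    have := Nat.mul_le_mul_left d (Nat.succ_le_of_lt h)
    rwa [Nat.mul_succ] at this
  have mono : ∀ x y, ((∃ i, x = a₂ + d * i) ∨ ∃ i, x = b₂ + d * i) →
      ((∃ i, y = a₂ + d * i) ∨ ∃ i, y = b₂ + d * i) → x ≤ y → f x ≤ f y := by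
    rintro x y (⟨i, rfl⟩ | ⟨i, rfl⟩) (⟨j, rfl⟩ | ⟨j, rfl⟩) h <;> simp only [fa, fb] <;>
      rcases lt_trichotomy i j with h1 | h1 | h1 <;>
      first
        | (have := mulstep _ _ h1; omega)
        | (subst h1; omega)
  have gf : ∀ x, ((∃ i, x = a₂ + d * i) ∨ ∃ i, x = b₂ + d * i) → g (f x) = x := by
    rintro x (⟨i, rfl⟩ | ⟨i, rfl⟩) <;> simp only [fa, fb, ga, gb]
  have fle : ∀ x, ((∃ i, x = a₂ + d * i) ∨ ∃ i, x = b₂ + d * i) → f x ≤ x ∧ a₁ ≤ f x ∧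
      (f x % d = a₁ % d ∨ f x % d = b₁ % d) := by
    rintro x (⟨i, rfl⟩ | ⟨i, rfl⟩) <;> simp only [fa, fb, Nat.add_mul_mod_self_left] <;>
      refine ⟨by omega, by omega, by simp⟩
  unfold ellP rP
  have key : ∀ M : Multiset ℕ, M ≠ 0 →
      (∀ x ∈ M, (∃ i, x = a₂ + d * i) ∨ ∃ i, x = b₂ + d * i) →
      (M.map f + Multiset.replicate (M.sup - f M.sup) a₁).sup = f M.sup := by
    intro M h0 hM
    have hs := aux_sup_mem M h0
    apply le_antisymm
    · rw [Multiset.sup_le]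
      intro y hy
      rcases Multiset.mem_add.1 hy with hy | hy
      · obtain ⟨x, hx, rfl⟩ := Multiset.mem_map.1 hy
        exact mono _ _ (hM x hx) (hM _ hs) (Multiset.le_sup hx)
      · rw [Multiset.eq_of_mem_replicate hy]
        exact (fle _ (hM _ hs)).2.1
    · exact Multiset.le_sup (Multiset.mem_add.2 (Or.inl (Multiset.mem_map_of_mem f hs)))
  refine Set.ncard_le_ncard_of_injOn
    (fun M => M.map f + Multiset.replicate (M.sup - f M.sup) a₁) ?_ ?_ (aux_fin _ _)
  · rintro M ⟨⟨h0, hpos⟩, hp, hM⟩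
    have hM' : ∀ x ∈ M, _ := fun x hx => form x (hpos x hx) (hM x hx)
    have hs := aux_sup_mem M h0
    have hall : ∀ y ∈ M.map f + Multiset.replicate (M.sup - f M.sup) a₁,
        0 < y ∧ (y % d = a₁ % d ∨ y % d = b₁ % d) := by
      intro y hy
      rcases Multiset.mem_add.1 hy with hy | hy
      · obtain ⟨x, hx, rfl⟩ := Multiset.mem_map.1 hy
        have := fle x (hM' x hx)
        exact ⟨by omega, this.2.2⟩
      · rw [Multiset.eq_of_mem_replicate hy]
        exact ⟨ha₁, Or.inl rfl⟩
    refine ⟨⟨?_, fun y hy => (hall y hy).1⟩, ?_, fun y hy => (hall y hy).2⟩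
    · intro h
      have : f M.sup ∈ M.map f + Multiset.replicate (M.sup - f M.sup) a₁ :=
        Multiset.mem_add.2 (Or.inl (Multiset.mem_map_of_mem f hs))
      rw [h] at this
      exact absurd this (Multiset.notMem_zero _)
    · unfold perim at hp ⊢
      rw [key M h0 hM', Multiset.card_add, Multiset.card_map, Multiset.card_replicate]
      have := (fle _ (hM' _ hs)).1
      omega
  · rintro M ⟨⟨h0, hpos⟩, hp, hM⟩ N ⟨⟨h0', hpos'⟩, hp', hN⟩ h
    have hM' : ∀ x ∈ M, _ := fun x hx => form x (hpos x hx) (hM x hx)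
    have hN' : ∀ x ∈ N, _ := fun x hx => form x (hpos' x hx) (hN x hx)
    simp only at h
    have hsup : M.sup = N.sup := by
      have h1 := congrArg Multiset.sup h
      rw [key M h0 hM', key N h0' hN'] at h1
      rw [← gf _ (hM' _ (aux_sup_mem M h0)), h1, gf _ (hN' _ (aux_sup_mem N h0'))]
    rw [hsup] at h
    have h2 := congrArg (Multiset.map g) (add_right_cancel h)
    rw [Multiset.map_map, Multiset.map_map] at h2
    have e : ∀ K : Multiset ℕ, (∀ x ∈ K, (∃ i, x = a₂ + d * i) ∨ ∃ i, x = b₂ + d * i) →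
        K.map (g ∘ f) = K := by
      intro K hK
      conv_rhs => rw [← Multiset.map_id K]
      exact Multiset.map_congr rfl (fun x hx => gf x (hK x hx))
    rwa [e M hM', e N hN'] at h2
end

section
/- For every integer n ≥ 1, the number of partitions (of any sum) with perimeter n equals 2^{n−1}. -/
open Multiset Finset Filter

/-- Pairs (largest part minus one, remaining parts). -/
def pairSet (k : ℕ) : Set (ℕ × Multiset ℕ) :=
  {p | (∀ x ∈ p.2, 0 < x ∧ x ≤ p.1 + 1) ∧ p.1 + Multiset.card p.2 = k}

theorem pairSet_zero : pairSet 0 = {((0 : ℕ), (0 : Multiset ℕ))} := by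
  ext ⟨m, N⟩
  simp only [pairSet, Set.mem_ofPred_eq, Set.mem_singleton_iff, Prod.mk.injEq]
  constructor
  · rintro ⟨_, h⟩
    exact ⟨by omega, Multiset.card_eq_zero.1 (by omega)⟩
  · rintro ⟨rfl, rfl⟩
    simp

/-- Duplicate the largest part. -/
def dupMap (p : ℕ × Multiset ℕ) : ℕ × Multiset ℕ := (p.1, (p.1 + 1) ::ₘ p.2)

/-- Increase the largest part. -/
def incMap (p : ℕ × Multiset ℕ) : ℕ × Multiset ℕ := (p.1 + 1, p.2)

theorem dupMap_inj : Function.Injective dupMap := by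
  rintro ⟨m, N⟩ ⟨m', N'⟩ h
  simp only [dupMap, Prod.mk.injEq] at h
  obtain ⟨rfl, h⟩ := h
  simpa using h

theorem incMap_inj : Function.Injective incMap := by
  rintro ⟨m, N⟩ ⟨m', N'⟩ h
  simpa [incMap] using h

theorem pairSet_succ (k : ℕ) :
    pairSet (k + 1) = Set.image dupMap (pairSet k) ∪ Set.image incMap (pairSet k) := by
  ext ⟨m, N⟩
  constructor
  · rintro ⟨h1, h2⟩
    simp only at h1 h2
    by_cases hm : m + 1 ∈ N
    · left
      obtain ⟨N', rfl⟩ := Multiset.exists_cons_of_mem hm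
      refine ⟨(m, N'), ⟨fun x hx => h1 x (Multiset.mem_cons_of_mem hx), ?_⟩, rfl⟩
      simp only [Multiset.card_cons] at h2 ⊢
      omega
    · right
      have hlt : ∀ x ∈ N, 0 < x ∧ x ≤ m := by
        intro x hx
        have := h1 x hx
        have hne : x ≠ m + 1 := by
          rintro rfl
          exact hm hx
        omega
      have hpos : 0 < m := by
        rcases Multiset.empty_or_exists_mem N with rfl | ⟨x, hx⟩
        · simp at h2
          omega
        · have := hlt x hx
          omega
      obtain ⟨j, rfl⟩ : ∃ j, m = j + 1 := ⟨m - 1, by omega⟩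
      refine ⟨(j, N), ⟨hlt, ?_⟩, rfl⟩
      simp only
      omega
  · rintro (⟨⟨a, A⟩, ⟨h1, h2⟩, h⟩ | ⟨⟨a, A⟩, ⟨h1, h2⟩, h⟩)
    · simp only [dupMap, Prod.mk.injEq] at h h1 h2
      obtain ⟨rfl, rfl⟩ := h
      refine ⟨?_, ?_⟩
      · intro x hx
        rcases Multiset.mem_cons.1 hx with rfl | hx
        · simp
        · exact h1 x hx
      · simp only [Multiset.card_cons]
        omega
    · simp only [incMap, Prod.mk.injEq] at h h1 h2
      obtain ⟨rfl, rfl⟩ := h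
      refine ⟨?_, ?_⟩
      · intro x hx
        have := h1 x hx
        simp only
        omega
      · simp only
        omega

theorem pairSet_card (k : ℕ) : (pairSet k).Finite ∧ (pairSet k).ncard = 2 ^ k := by
  induction k with
  | zero => simp [pairSet_zero]
  | succ k ih =>
    obtain ⟨hf, hc⟩ := ih
    have hd : Disjoint (Set.image dupMap (pairSet k)) (Set.image incMap (pairSet k)) := by
      rw [Set.disjoint_left]
      rintro _ ⟨⟨a, A⟩, _, rfl⟩ ⟨⟨b, B⟩, ⟨h1, _⟩, h⟩
      simp only [incMap, dupMap, Prod.mk.injEq] at h h1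
      obtain ⟨rfl, rfl⟩ := h
      have := h1 (b + 1 + 1) (Multiset.mem_cons_self _ _)
      omega
    rw [pairSet_succ]
    refine ⟨(hf.image _).union (hf.image _), ?_⟩
    rw [Set.ncard_union_eq hd (hf.image _) (hf.image _),
      Set.ncard_image_of_injective _ dupMap_inj, Set.ncard_image_of_injective _ incMap_inj, hc]
    ring

theorem sup_pair {p : ℕ × Multiset ℕ} (h : ∀ x ∈ p.2, 0 < x ∧ x ≤ p.1 + 1) :
    ((p.1 + 1) ::ₘ p.2).sup = p.1 + 1 := by
  rw [Multiset.sup_cons]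
  exact sup_eq_left.2 (Multiset.sup_le.2 fun x hx => (h x hx).2)

theorem sup_mem_of_ne {M : Multiset ℕ} : M ≠ 0 → M.sup ∈ M := by
  induction M using Multiset.induction_on with
  | empty => simp
  | cons a s ih =>
    intro _
    rw [Multiset.sup_cons]
    by_cases hs : s = 0
    · subst hs
      simp
    · rcases le_total a s.sup with h | h
      · rw [sup_eq_right.2 h]
        exact Multiset.mem_cons_of_mem (ih hs)
      · rw [sup_eq_left.2 h]
        exact Multiset.mem_cons_self _ _

theorem stmt_8 (n : ℕ) (hn : 1 ≤ n) : rP n (fun _ => True) = 2 ^ (n - 1) := by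
  obtain ⟨k, rfl⟩ : ∃ k, n = k + 1 := ⟨n - 1, by omega⟩
  have himg : {M : Multiset ℕ | IsPartition M ∧ perim M = k + 1 ∧ True} =
      Set.image (fun p : ℕ × Multiset ℕ => (p.1 + 1) ::ₘ p.2) (pairSet k) := by
    ext M
    constructor
    · rintro ⟨⟨h0, hpos⟩, hp, _⟩
      have hs := sup_mem_of_ne h0
      have hsp := hpos _ hs
      have hle : ∀ x ∈ M, x ≤ M.sup := fun x hx => Multiset.le_sup hx
      obtain ⟨N, hN⟩ := Multiset.exists_cons_of_mem hs
      have hcard : Multiset.card M = Multiset.card N + 1 := by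
        conv_lhs => rw [hN]
        simp
      have hsub : ∀ x ∈ N, x ∈ M := by
        intro x hx
        rw [hN]
        exact Multiset.mem_cons_of_mem hx
      unfold perim at hp
      refine ⟨(M.sup - 1, N), ⟨?_, ?_⟩, ?_⟩
      · intro x hx
        have h1 := hpos x (hsub x hx)
        have h2 := hle x (hsub x hx)
        simp only
        omega
      · simp only
        omega
      · simp only [Nat.sub_add_cancel hsp]
        exact hN.symm
    · rintro ⟨p, ⟨h1, h2⟩, rfl⟩
      refine ⟨⟨Multiset.cons_ne_zero, ?_⟩, ?_, trivial⟩
      · intro x hx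
        rcases Multiset.mem_cons.1 hx with rfl | hx
        · omega
        · exact (h1 x hx).1
      · simp only [perim, sup_pair h1, Multiset.card_cons]
        omega
  unfold rP
  rw [himg, Set.ncard_image_of_injOn, (pairSet_card k).2, Nat.add_sub_cancel]
  rintro ⟨a, A⟩ ⟨ha, _⟩ ⟨b, B⟩ ⟨hb, _⟩ h
  have hs := congrArg Multiset.sup h
  simp only at hs h
  rw [sup_pair ha, sup_pair hb] at hs
  obtain rfl : a = b := by simpa using hs
  simpa using h
end

section
/- The following identity holds as formal power series in the variables x, y, z, q over ℤ: (1 − 2yq + (y² − x²)q² + (1−z)x²y q³) · ∑_{α,λ,n ≥ 1} ∑_{j ≥ 0} FO_{j,2}(α,λ,n) x^α y^λ z^j qⁿ = x y q (1 − (y − xz) q). -/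
open Multiset Finset Filter

/-- `FOt j α lam n`: partitions with perimeter n, largest part α, lam parts, and exactly j
distinct even part values. -/
noncomputable def FOt (j α lam n : ℕ) : ℕ :=
  Set.ncard {M : Multiset ℕ | IsPartition M ∧ M.sup = α ∧ Multiset.card M = lam ∧
    perim M = n ∧ (M.toFinset.filter (fun v => Even v)).card = j}

/-- The generating series ∑ FOt(j,α,λ,n) x^α y^λ z^j q^n, with variables
x = X 0, y = X 1, z = X 2, q = X 3. -/
noncomputable def FOseries : MvPowerSeries (Fin 4) ℤ :=
  fun e => if 1 ≤ e 0 ∧ 1 ≤ e 1 ∧ 1 ≤ e 3 then (FOt (e 2) (e 0) (e 1) (e 3) : ℤ) else 0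

/-- Number of distinct even values. -/
def evN (M : Multiset ℕ) : ℕ := (M.toFinset.filter (fun v => Even v)).card

/-- Multisets of positive integers at most `a`, of size `l`, with `j` even values. -/
def setD (a l j : ℤ) : Set (Multiset ℕ) :=
  {M | (∀ x ∈ M, 0 < x ∧ (x : ℤ) ≤ a) ∧ (Multiset.card M : ℤ) = l ∧ (evN M : ℤ) = j}

/-- Those of `setD` that contain `a`. -/
def setC (a l j : ℤ) : Set (Multiset ℕ) :=
  {M | M ∈ setD a l j ∧ ∃ x ∈ M, (x : ℤ) = a}

noncomputable def nD (a l j : ℤ) : ℤ := ((setD a l j).ncard : ℤ)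
noncomputable def nC (a l j : ℤ) : ℤ := ((setC a l j).ncard : ℤ)

lemma setD_finite (a l j : ℤ) : (setD a l j).Finite := by
  apply (Set.finite_Iic (l.toNat • (Finset.range (a.toNat + 1)).val)).subset
  rintro M ⟨h1, h2, h3⟩
  rw [Set.mem_Iic, Multiset.le_iff_count]
  intro x
  by_cases hx : x ∈ M
  · have h4 := h1 x hx
    have h5 : x ∈ Finset.range (a.toNat + 1) := by
      rw [Finset.mem_range]; omega
    rw [Multiset.count_nsmul, Multiset.count_eq_one_of_mem (Finset.nodup _) h5]
    have := Multiset.count_le_card x M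
    omega
  · rw [Multiset.count_eq_zero_of_notMem hx]; exact Nat.zero_le _

lemma setC_finite (a l j : ℤ) : (setC a l j).Finite :=
  (setD_finite a l j).subset fun _ h => h.1

lemma nC_zero (a l j : ℤ) (h : a ≤ 0 ∨ l ≤ 0 ∨ j < 0) : nC a l j = 0 := by
  have : setC a l j = ∅ := by
    rw [Set.eq_empty_iff_forall_notMem]
    rintro M ⟨⟨h1, h2, h3⟩, x, hx, hxa⟩
    have h4 := h1 x hx
    have h5 : 0 < Multiset.card M := Multiset.card_pos_iff_exists_mem.2 ⟨x, hx⟩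
    omega
  simp [nC, this]

lemma nD_zero (l j : ℤ) : nD 0 l j = if l = 0 ∧ j = 0 then 1 else 0 := by
  have key : ∀ M, M ∈ setD 0 l j → M = 0 := by
    rintro M ⟨h1, h2, h3⟩
    refine Multiset.eq_zero_of_forall_notMem fun x hx => ?_
    have := h1 x hx
    omega
  split_ifs with h
  · obtain ⟨rfl, rfl⟩ := h
    have : setD 0 0 0 = {0} := by
      ext M
      constructor
      · exact key M
      · rintro rfl
        simp [setD, evN]
    simp [nD, this]
  · have : setD 0 l j = ∅ := by
      rw [Set.eq_empty_iff_forall_notMem]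
      intro M hM
      have h0 := key M hM
      subst h0
      obtain ⟨h1, h2, h3⟩ := hM
      simp [evN] at h2 h3
      omega
    simp [nD, this]

lemma nD_rec (a l j : ℤ) : nD a l j = nD (a - 1) l j + nC a l j := by
  have : setD a l j = setD (a - 1) l j ∪ setC a l j := by
    ext M
    constructor
    · intro hM
      by_cases h : ∃ x ∈ M, (x : ℤ) = a
      · exact Or.inr ⟨hM, h⟩
      · left
        push Not at h
        refine ⟨fun x hx => ?_, hM.2⟩
        have h1 := hM.1 x hx
        have h2 := h x hx
        omega
    · rintro (hM | hM)
      · refine ⟨fun x hx => ?_, hM.2⟩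
        have h1 := hM.1 x hx
        omega
      · exact hM.1
  unfold nD nC
  rw [this, Set.ncard_union_eq _ (setD_finite _ _ _) (setC_finite _ _ _)]
  · push_cast; rfl
  · rw [Set.disjoint_left]
    rintro M hM ⟨-, x, hx, hxa⟩
    have := hM.1 x hx
    omega

lemma evN_cons_mem (n : ℕ) (M : Multiset ℕ) (h : n ∈ M) : evN (n ::ₘ M) = evN M := by
  unfold evN
  rw [Multiset.toFinset_cons, Finset.insert_eq_self.2 (by simpa using h)]

lemma evN_cons_notMem (n : ℕ) (M : Multiset ℕ) (h : n ∉ M) :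
    evN (n ::ₘ M) = evN M + if Even n then 1 else 0 := by
  unfold evN
  rw [Multiset.toFinset_cons, Finset.filter_insert]
  split_ifs with he
  · rw [Finset.card_insert_of_notMem]
    simp [h]
  · rfl

lemma nC_rec (a l j : ℤ) (ha : 1 ≤ a) :
    nC a l j = nC a (l - 1) j + nD (a - 1) (l - 1) (j - if Even a then 1 else 0) := by
  obtain ⟨n, rfl⟩ : ∃ n : ℕ, a = n := ⟨a.toNat, by omega⟩
  simp only [Int.even_coe_nat]
  have : setC n l j = (fun M => n ::ₘ M) '' (setC n (l - 1) j ∪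
      setD (n - 1) (l - 1) (j - if Even n then 1 else 0)) := by
    ext M
    constructor
    · rintro ⟨⟨h1, h2, h3⟩, x, hx, hxa⟩
      have hxn : x = n := by exact_mod_cast hxa
      subst hxn
      obtain ⟨N, rfl⟩ := Multiset.exists_cons_of_mem hx
      refine ⟨N, ?_, rfl⟩
      have h4 : ∀ y ∈ N, 0 < y ∧ (y : ℤ) ≤ x := fun y hy => h1 y (Multiset.mem_cons_of_mem hy)
      rw [Multiset.card_cons] at h2
      by_cases hN : x ∈ N
      · left
        rw [evN_cons_mem _ _ hN] at h3
        exact ⟨⟨h4, by omega, h3⟩, x, hN, rfl⟩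
      · right
        rw [evN_cons_notMem _ _ hN] at h3
        refine ⟨fun y hy => ?_, by omega, ?_⟩
        · have h5 := h4 y hy
          have : y ≠ x := by rintro rfl; exact hN hy
          omega
        · rw [← h3]; push_cast; ring
    · rintro ⟨N, hN, rfl⟩
      refine ⟨?_, n, Multiset.mem_cons_self _ _, rfl⟩
      rcases hN with ⟨⟨h1, h2, h3⟩, x, hx, hxa⟩ | ⟨h1, h2, h3⟩
      · have hxn : x = n := by exact_mod_cast hxa
        subst hxn
        refine ⟨?_, ?_, ?_⟩
        · intro y hy
          rcases Multiset.mem_cons.1 hy with rfl | hy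
          · omega
          · exact h1 y hy
        · rw [Multiset.card_cons]; push_cast; omega
        · rw [evN_cons_mem _ _ hx]; exact h3
      · have hnN : n ∉ N := fun h => by have := h1 n h; omega
        refine ⟨?_, ?_, ?_⟩
        · intro y hy
          rcases Multiset.mem_cons.1 hy with rfl | hy
          · omega
          · have := h1 y hy
            omega
        · rw [Multiset.card_cons]; push_cast; omega
        · rw [evN_cons_notMem _ _ hnN]; push_cast; rw [h3]; ring
  unfold nD nC
  rw [this, Set.ncard_image_of_injective _ (fun _ _ h => (Multiset.cons_inj_right n).1 h),
    Set.ncard_union_eq _ (setC_finite _ _ _) (setD_finite _ _ _)]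
  · push_cast; rfl
  · rw [Set.disjoint_left]
    rintro M ⟨-, x, hx, hxa⟩ hM
    have := hM.1 x hx
    omega

lemma nC_odd (a l j : ℤ) (ha : 1 ≤ a) (h : ¬ Even a) :
    nC a l j = nC a (l - 1) j + nD (a - 1) (l - 1) j := by
  have := nC_rec a l j ha
  rwa [if_neg h, sub_zero] at this

lemma nC_even (a l j : ℤ) (ha : 1 ≤ a) (h : Even a) :
    nC a l j = nC a (l - 1) j + nD (a - 1) (l - 1) (j - 1) := by
  have := nC_rec a l j ha
  rwa [if_pos h] at this

lemma main_rec (a l j : ℤ) :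
    nC a l j - 2 * nC a (l - 1) j + nC a (l - 2) j - nC (a - 2) l j
      + nC (a - 2) (l - 1) j - nC (a - 2) (l - 1) (j - 1)
    = (if a = 1 ∧ l = 1 ∧ j = 0 then 1 else 0) - (if a = 1 ∧ l = 2 ∧ j = 0 then 1 else 0)
      + (if a = 2 ∧ l = 1 ∧ j = 1 then 1 else 0) := by
  rcases lt_trichotomy a 1 with h | rfl | h
  · simp only [nC_zero a _ _ (Or.inl (by omega : a ≤ 0)),
      nC_zero (a - 2) _ _ (Or.inl (by omega : a - 2 ≤ 0))]
    rw [if_neg (by omega), if_neg (by omega), if_neg (by omega)]; rfl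
  · simp only [nC_zero (1 - 2) _ _ (Or.inl (by omega : (1:ℤ) - 2 ≤ 0))]
    have e1 := nC_odd 1 l j le_rfl (by decide)
    have e2 := nC_odd 1 (l - 1) j le_rfl (by decide)
    rw [sub_self, nD_zero] at e1 e2
    rw [show l - 1 - 1 = l - 2 by ring] at e2
    grind
  rcases eq_or_lt_of_le (show 2 ≤ a by omega) with rfl | h3
  · simp only [nC_zero (2 - 2) _ _ (Or.inl (by omega : (2:ℤ) - 2 ≤ 0))]
    have e1 := nC_even 2 l j (by omega) (by decide)
    have e2 := nC_even 2 (l - 1) j (by omega) (by decide)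
    have e3 := nC_odd 1 (l - 1) (j - 1) le_rfl (by decide)
    have d1 := nD_rec 1 (l - 1) (j - 1)
    have d2 := nD_rec 1 (l - 1 - 1) (j - 1)
    rw [show (2:ℤ) - 1 = 1 by ring] at e1 e2
    rw [sub_self, nD_zero] at e3 d1 d2
    rw [show l - 1 - 1 = l - 2 by ring] at *
    grind
  · rw [if_neg (by omega), if_neg (by omega), if_neg (by omega)]
    have s2 : l - 1 - 1 = l - 2 := by ring
    have a2 : a - 1 - 1 = a - 2 := by ring
    have a3 : a - 2 - 1 = a - 3 := by ring
    have j2 : j - 1 - 1 = j - 2 := by ring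
    by_cases he : Even a
    · have o1 : ¬ Even (a - 1) := by
        rw [Int.even_sub_one]; simpa using he
      have o2 : Even (a - 2) := he.sub even_two
      have e1 := nC_even a l j (by omega) he
      have e2 := nC_even a (l - 1) j (by omega) he
      have e3 := nC_odd (a - 1) (l - 1) (j - 1) (by omega) o1
      have d1 := nD_rec (a - 1) (l - 1) (j - 1)
      have d2 := nD_rec (a - 1) (l - 2) (j - 1)
      have d3 := nD_rec (a - 2) (l - 1) (j - 1)
      have e4 := nC_even (a - 2) l j (by omega) o2
      have e5 := nC_even (a - 2) (l - 1) (j - 1) (by omega) o2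
      have e6 := nC_even (a - 2) (l - 1) j (by omega) o2
      simp only [s2, a2, a3, j2] at *
      linarith
    · have o1 : Even (a - 1) := by
        rw [Int.even_sub_one]; exact he
      have o2 : ¬ Even (a - 2) := fun h => he (by simpa using h.add even_two)
      have e1 := nC_odd a l j (by omega) he
      have e2 := nC_odd a (l - 1) j (by omega) he
      have e3 := nC_even (a - 1) (l - 1) j (by omega) o1
      have d1 := nD_rec (a - 1) (l - 1) j
      have d2 := nD_rec (a - 1) (l - 2) j
      have d3 := nD_rec (a - 2) (l - 1) j
      have d4 := nD_rec (a - 2) (l - 2) j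
      have d5 := nD_rec (a - 2) (l - 2) (j - 1)
      have e4 := nC_odd (a - 2) l j (by omega) o2
      have e5 := nC_odd (a - 2) (l - 1) (j - 1) (by omega) o2
      have e6 := nC_odd (a - 2) (l - 1) j (by omega) o2
      simp only [s2, a2, a3, j2] at *
      linarith

/-- Coefficients of the series, as a function of integer exponents. -/
noncomputable def cf (a l j n : ℤ) : ℤ := if n = a + l - 1 then nC a l j else 0

lemma cf_zero (a l j n : ℤ) (h : a < 0 ∨ l < 0 ∨ j < 0 ∨ n < 0) : cf a l j n = 0 := by
  unfold cf
  split_ifs with h1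
  · apply nC_zero; omega
  · rfl

lemma FOt_eq (a l j n : ℕ) (ha : 1 ≤ a) (hl : 1 ≤ l) : (FOt j a l n : ℤ) = cf a l j n := by
  unfold cf FOt
  split_ifs with h
  · unfold nC
    congr 2
    ext M
    constructor
    · rintro ⟨⟨h0, h1⟩, h2, h3, h4, h5⟩
      refine ⟨⟨fun x hx => ⟨h1 x hx, ?_⟩, by exact_mod_cast h3, by exact_mod_cast h5⟩, a, ?_, rfl⟩
      · rw [← h2]; exact_mod_cast Multiset.le_sup hx
      · by_contra hna
        have : M.sup ≤ a - 1 := by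
          rw [Multiset.sup_le]
          intro b hb
          have h6 := Multiset.le_sup hb
          have : b ≠ a := by rintro rfl; exact hna hb
          omega
        omega
    · rintro ⟨⟨h1, h2, h3⟩, x, hx, hxa⟩
      have hxn : x = a := by exact_mod_cast hxa
      subst hxn
      have hs : M.sup = x := by
        apply le_antisymm
        · rw [Multiset.sup_le]
          intro b hb
          exact_mod_cast (h1 b hb).2
        · exact Multiset.le_sup hx
      have h2' : Multiset.card M = l := by exact_mod_cast h2
      refine ⟨⟨?_, fun y hy => (h1 y hy).1⟩, hs, h2', ?_, by exact_mod_cast h3⟩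
      · rintro rfl; simp at hx
      · unfold perim; omega
  · have : {M : Multiset ℕ | IsPartition M ∧ M.sup = a ∧ Multiset.card M = l ∧
      perim M = n ∧ (M.toFinset.filter (fun v => Even v)).card = j} = ∅ := by
      rw [Set.eq_empty_iff_forall_notMem]
      rintro M ⟨h0, h2, h3, h4, h5⟩
      unfold perim at h4
      omega
    rw [this]; simp

lemma coeff_FO (e : Fin 4 →₀ ℕ) :
    MvPowerSeries.coeff e FOseries = cf (e 0) (e 1) (e 2) (e 3) := by
  change (if 1 ≤ e 0 ∧ 1 ≤ e 1 ∧ 1 ≤ e 3 then (FOt (e 2) (e 0) (e 1) (e 3) : ℤ) else 0) = _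
  split_ifs with h
  · exact FOt_eq _ _ _ _ h.1 h.2.1
  · unfold cf
    split_ifs with h1
    · rw [nC_zero]; omega
    · rfl

/-- The exponent vector. -/
noncomputable def ex (i k m n : ℕ) : Fin 4 →₀ ℕ :=
  Finsupp.single 0 i + Finsupp.single 1 k + Finsupp.single 2 m + Finsupp.single 3 n

lemma ex0 (i k m n : ℕ) : ex i k m n 0 = i := by simp [ex]
lemma ex1 (i k m n : ℕ) : ex i k m n 1 = k := by simp [ex]
lemma ex2 (i k m n : ℕ) : ex i k m n 2 = m := by simp [ex]
lemma ex3 (i k m n : ℕ) : ex i k m n 3 = n := by simp [ex]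

open MvPowerSeries in
lemma mono_eq (i k m n : ℕ) : (X 0 : MvPowerSeries (Fin 4) ℤ) ^ i * X 1 ^ k * X 2 ^ m * X 3 ^ n
    = monomial (ex i k m n) 1 := by
  simp [X_pow_eq, monomial_mul_monomial, ex]

open MvPowerSeries in
lemma coeff_shift (i k m n : ℕ) (e : Fin 4 →₀ ℕ) :
    coeff e ((X 0 : MvPowerSeries (Fin 4) ℤ) ^ i * X 1 ^ k * X 2 ^ m * X 3 ^ n * FOseries)
    = cf (e 0 - i) (e 1 - k) (e 2 - m) (e 3 - n) := by
  rw [mono_eq, coeff_monomial_mul]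
  have hle : ex i k m n ≤ e ↔ i ≤ e 0 ∧ k ≤ e 1 ∧ m ≤ e 2 ∧ n ≤ e 3 := by
    rw [Finsupp.le_def]
    constructor
    · intro h
      have h0 := h 0
      have h1 := h 1
      have h2 := h 2
      have h3 := h 3
      rw [ex0] at h0; rw [ex1] at h1; rw [ex2] at h2; rw [ex3] at h3
      exact ⟨h0, h1, h2, h3⟩
    · rintro ⟨h0, h1, h2, h3⟩ t
      fin_cases t
      · exact (ex0 i k m n).le.trans h0
      · exact (ex1 i k m n).le.trans h1
      · exact (ex2 i k m n).le.trans h2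
      · exact (ex3 i k m n).le.trans h3
  split_ifs with h
  · rw [coeff_FO, one_mul]
    obtain ⟨h0, h1, h2, h3⟩ := hle.1 h
    simp only [Finsupp.tsub_apply, ex0, ex1, ex2, ex3]
    rw [Nat.cast_sub h0, Nat.cast_sub h1, Nat.cast_sub h2, Nat.cast_sub h3]
  · rw [hle] at h
    rw [cf_zero]; omega

open MvPowerSeries in
lemma coeff_mono (i k m n : ℕ) (e : Fin 4 →₀ ℕ) :
    coeff e ((X 0 : MvPowerSeries (Fin 4) ℤ) ^ i * X 1 ^ k * X 2 ^ m * X 3 ^ n)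
    = if (e 0 : ℤ) = i ∧ (e 1 : ℤ) = k ∧ (e 2 : ℤ) = m ∧ (e 3 : ℤ) = n then 1 else 0 := by
  simp only [Nat.cast_inj]
  rw [mono_eq, coeff_monomial]
  congr 1
  rw [eq_iff_iff]
  constructor
  · rintro rfl
    exact ⟨ex0 i k m n, ex1 i k m n, ex2 i k m n, ex3 i k m n⟩
  · rintro ⟨h0, h1, h2, h3⟩
    ext t
    fin_cases t
    · exact h0.trans (ex0 i k m n).symm
    · exact h1.trans (ex1 i k m n).symm
    · exact h2.trans (ex2 i k m n).symm
    · exact h3.trans (ex3 i k m n).symm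

lemma cf_rec (a l j n : ℤ) :
    cf a l j n - 2 * cf a (l - 1) j (n - 1) + cf a (l - 2) j (n - 2) - cf (a - 2) l j (n - 2)
      + cf (a - 2) (l - 1) j (n - 3) - cf (a - 2) (l - 1) (j - 1) (n - 3)
    = (if a = 1 ∧ l = 1 ∧ j = 0 ∧ n = 1 then 1 else 0)
      - (if a = 1 ∧ l = 2 ∧ j = 0 ∧ n = 2 then 1 else 0)
      + (if a = 2 ∧ l = 1 ∧ j = 1 ∧ n = 2 then 1 else 0) := by
  have := main_rec a l j
  unfold cf
  by_cases h : n = a + l - 1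
  · rw [if_pos h, if_pos (by omega), if_pos (by omega), if_pos (by omega), if_pos (by omega),
      if_pos (by omega), this]
    congr 1
    · congr 1
      · exact if_congr (by omega) rfl rfl
      · exact if_congr (by omega) rfl rfl
    · exact if_congr (by omega) rfl rfl
  · rw [if_neg h, if_neg (by omega), if_neg (by omega), if_neg (by omega), if_neg (by omega),
      if_neg (by omega), if_neg (by omega), if_neg (by omega), if_neg (by omega)]
    rfl

open MvPowerSeries in
theorem stmt_16 :
    ((1 : MvPowerSeries (Fin 4) ℤ) - 2 * X 1 * X 3
          + ((X 1) ^ 2 - (X 0) ^ 2) * (X 3) ^ 2 + (1 - X 2) * (X 0) ^ 2 * X 1 * (X 3) ^ 3) *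
        FOseries =
      X 0 * X 1 * X 3 * (1 - (X 1 - X 0 * X 2) * X 3) := by
  have hL : ((1 : MvPowerSeries (Fin 4) ℤ) - 2 * X 1 * X 3
          + ((X 1) ^ 2 - (X 0) ^ 2) * (X 3) ^ 2 + (1 - X 2) * (X 0) ^ 2 * X 1 * (X 3) ^ 3) *
        FOseries = X 0 ^ 0 * X 1 ^ 0 * X 2 ^ 0 * X 3 ^ 0 * FOseries
        - (X 0 ^ 0 * X 1 ^ 1 * X 2 ^ 0 * X 3 ^ 1 * FOseries
          + X 0 ^ 0 * X 1 ^ 1 * X 2 ^ 0 * X 3 ^ 1 * FOseries)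
        + X 0 ^ 0 * X 1 ^ 2 * X 2 ^ 0 * X 3 ^ 2 * FOseries
        - X 0 ^ 2 * X 1 ^ 0 * X 2 ^ 0 * X 3 ^ 2 * FOseries
        + X 0 ^ 2 * X 1 ^ 1 * X 2 ^ 0 * X 3 ^ 3 * FOseries
        - X 0 ^ 2 * X 1 ^ 1 * X 2 ^ 1 * X 3 ^ 3 * FOseries := by ring
  have hR : (X 0 * X 1 * X 3 * (1 - (X 1 - X 0 * X 2) * X 3) : MvPowerSeries (Fin 4) ℤ)
      = X 0 ^ 1 * X 1 ^ 1 * X 2 ^ 0 * X 3 ^ 1 - X 0 ^ 1 * X 1 ^ 2 * X 2 ^ 0 * X 3 ^ 2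
        + X 0 ^ 2 * X 1 ^ 1 * X 2 ^ 1 * X 3 ^ 2 := by ring
  rw [hL, hR]
  ext e
  simp only [_root_.map_add, _root_.map_sub, coeff_shift, coeff_mono]
  have := cf_rec (e 0) (e 1) (e 2) (e 3)
  rw [two_mul] at this
  simpa only [Nat.cast_ofNat, Nat.cast_zero, Nat.cast_one, sub_zero] using this
end
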